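/- Let (X,d,μ) be a metric measure space with μ a doubling measure, let Ω ⊂ X be open with X∖Ω nonempty, and let {B_i = B(x_i,r_i)}_{i∈ℕ} be a Whitney cover of Ω with r_i = d_Ω(x_i)/8, Ω = ∪_i B_i, and Σ_i χ_{6B_i} ≤ N, together with a partition of unity {φ_i}_i such that each φ_i is (L/r_i)-Lipschitz, 0 ≤ φ_i ≤ χ_{2B_i}, and Σ_i φ_i = 1 on Ω. Let δ > 0 and let w be a δ-regularizable weight in Ω which is integrable on each ball B_i, and define the discrete convolution w̃ = Σ_i w_{B_i} φ_i on Ω. Then there exists a constant C₀ ≥ 1, depending only on N and L, such that for each i, the restriction of w̃ to B_i is Lipschitz with constant C₀ δ w_{B_i} / r_i. -/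

import Mathlib

open MeasureTheory Metric Set ENNReal

/-- `ν` is a doubling measure with doubling constant `Cν`:
`0 < ν(B(x,2r)) ≤ Cν · ν(B(x,r)) < ∞` for all `x` and `r > 0`. -/
def IsDoublingWith {Z : Type*} [PseudoMetricSpace Z] [MeasurableSpace Z]
    (ν : Measure Z) (Cν : ℝ) : Prop :=
  ∀ (x : Z) (r : ℝ), 0 < r →
    0 < ν (ball x (2 * r)) ∧
    ν (ball x (2 * r)) ≤ ENNReal.ofReal Cν * ν (ball x r) ∧
    ν (ball x r) < ⊤

/-- `E` is `c`-porous: for every `x` and every `0 < r < diam E` there is `y ∈ B(x,r)`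
with `B(y,cr) ⊆ X∖E`. -/
def IsPorous {X : Type*} [MetricSpace X] (c : ℝ) (E : Set X) : Prop :=
  ∀ (x : X) (r : ℝ), 0 < r → ENNReal.ofReal r < EMetric.diam E →
    ∃ y ∈ ball x r, ball y (c * r) ⊆ Eᶜ

/-- The weight `w` is `δ`-regularizable in `Ω`: whenever `x, x' ∈ Ω` and the balls
`B_x = B(x, d_Ω(x)/8)`, `B_{x'} = B(x', d_Ω(x')/8)` satisfy `2B_{x'} ∩ B_x ≠ ∅`,
the averages satisfy `|w_{B_x} - w_{B_{x'}}| ≤ δ w_{B_x}`. -/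
def DeltaRegularizable {X : Type*} [MetricSpace X] [MeasurableSpace X]
    (μ : Measure X) (Ω : Set X) (w : X → ℝ) (δ : ℝ) : Prop :=
  ∀ x ∈ Ω, ∀ x' ∈ Ω,
    (ball x' (2 * (infDist x' Ωᶜ / 8)) ∩ ball x (infDist x Ωᶜ / 8)).Nonempty →
    |(⨍ y in ball x (infDist x Ωᶜ / 8), w y ∂μ) -
        ⨍ y in ball x' (infDist x' Ωᶜ / 8), w y ∂μ| ≤
      δ * ⨍ y in ball x (infDist x Ωᶜ / 8), w y ∂μ

/-!
Since the `φ j` sum to one at both `a` and `b`, subtracting the constant `c i` from the coefficients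
does not change the difference of the two values of `∑ c j φ j`, which is therefore
`∑ (φ j a - φ j b) (c j - c i)`. By bounded overlap at most `2N` terms are nonzero. Each of them
comes from a ball with `2B_j ∩ B_i ≠ ∅`, for which `r_i ≤ 2 r_j`; so `φ j` is `2L / r_i`-Lipschitz
and the oscillation `c j - c i` of the coefficients is controlled by regularizability.
-/

theorem sum_smul_sub_sum_smul_eq_sum_sub_smul_sub {ι R E : Type*} [Ring R] [AddCommGroup E]
    [Module R E] {s : Finset ι} {f g : ι → R} (hfg : ∑ j ∈ s, f j = ∑ j ∈ s, g j)
    (c : ι → E) (c₀ : E) :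
    ∑ j ∈ s, f j • c j - ∑ j ∈ s, g j • c j = ∑ j ∈ s, (f j - g j) • (c j - c₀) := by
  simp only [smul_sub, sub_smul, Finset.sum_sub_distrib, ← Finset.sum_smul, hfg]
  abel

theorem norm_tsum_smul_sub_tsum_smul_le {ι R E : Type*} [SeminormedRing R]
    [SeminormedAddCommGroup E] [Module R E] [IsBoundedSMul R E] {f g : ι → R}
    (hf : f.support.Finite) (hg : g.support.Finite) (hfg : ∑' j, f j = ∑' j, g j)
    {c : ι → E} {c₀ : E} {K : ℝ}
    (hK : ∀ j ∈ f.support ∪ g.support, ‖f j - g j‖ * ‖c j - c₀‖ ≤ K) :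
    ‖∑' j, f j • c j - ∑' j, g j • c j‖ ≤ (f.support ∪ g.support).ncard * K := by
  set s : Finset ι := (hf.union hg).toFinset with hs
  have mem_s {j : ι} : j ∈ s ↔ j ∈ f.support ∪ g.support := (hf.union hg).mem_toFinset
  have hf_zero : ∀ j ∉ s, f j = 0 := fun j hj =>
    Function.notMem_support.1 fun h => hj (mem_s.2 (.inl h))
  have hg_zero : ∀ j ∉ s, g j = 0 := fun j hj =>
    Function.notMem_support.1 fun h => hj (mem_s.2 (.inr h))
  rw [tsum_eq_sum hf_zero, tsum_eq_sum hg_zero] at hfg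
  rw [tsum_eq_sum fun j hj => by rw [hf_zero j hj, zero_smul],
    tsum_eq_sum fun j hj => by rw [hg_zero j hj, zero_smul],
    sum_smul_sub_sum_smul_eq_sum_sub_smul_sub hfg c c₀]
  calc ‖∑ j ∈ s, (f j - g j) • (c j - c₀)‖
      ≤ ∑ j ∈ s, ‖f j - g j‖ * ‖c j - c₀‖ := norm_sum_le_of_le s fun _ _ => norm_smul_le _ _
    _ ≤ s.card • K := Finset.sum_le_card_nsmul s _ K fun j hj => hK j (mem_s.1 hj)
    _ = (f.support ∪ g.support).ncard * K := by
      rw [nsmul_eq_mul, hs, ncard_eq_toFinset_card _ (hf.union hg)]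

theorem ncard_support_union_support_le {ι R : Type*} [Zero R] {f g : ι → R} {A B : Set ι} {N : ℝ}
    (hfA : f.support ⊆ A) (hgB : g.support ⊆ B) (hA : A.Finite ∧ (A.ncard : ℝ) ≤ N)
    (hB : B.Finite ∧ (B.ncard : ℝ) ≤ N) :
    ((f.support ∪ g.support).ncard : ℝ) ≤ 2 * N :=
  calc ((f.support ∪ g.support).ncard : ℝ)
      ≤ (A ∪ B).ncard := mod_cast ncard_le_ncard (union_subset_union hfA hgB) (hA.1.union hB.1)
    _ ≤ A.ncard + B.ncard := mod_cast ncard_union_le A B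
    _ ≤ 2 * N := by linarith [hA.2, hB.2]

theorem infDist_le_two_mul_infDist_of_ball_inter_ball_nonempty {X : Type*} [PseudoMetricSpace X]
    {s : Set X} {x y : X}
    (h : (ball y (2 * (infDist y s / 8)) ∩ ball x (infDist x s / 8)).Nonempty) :
    infDist x s ≤ 2 * infDist y s := by
  obtain ⟨z, hzy, hzx⟩ := h
  rw [mem_ball] at hzy hzx
  linarith [infDist_le_infDist_add_dist (s := s) (x := x) (y := y), dist_triangle_left x y z,
    infDist_nonneg (s := s) (x := y)]

theorem mem_of_infDist_compl_pos {X : Type*} [PseudoMetricSpace X] {Ω : Set X} {x : X}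
    (hx : 0 < infDist x Ωᶜ) : x ∈ Ω :=
  ball_infDist_compl_subset (mem_ball_self hx)

theorem DeltaRegularizable.abs_setAverage_sub_setAverage_le {X : Type*} [MetricSpace X]
    [MeasurableSpace X] {μ : Measure X} {Ω : Set X} {w : X → ℝ} {δ : ℝ}
    (hw : DeltaRegularizable μ Ω w δ) {x x' : X} {r r' : ℝ}
    (hr : r = infDist x Ωᶜ / 8) (hr' : r' = infDist x' Ωᶜ / 8)
    (h : (ball x' (2 * r') ∩ ball x r).Nonempty) :
    |(⨍ y in ball x r, w y ∂μ) - ⨍ y in ball x' r', w y ∂μ| ≤ δ * ⨍ y in ball x r, w y ∂μ := by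
  have hr_pos : 0 < r := nonempty_ball.1 h.right
  have hr'_pos : 0 < 2 * r' := nonempty_ball.1 h.left
  subst hr hr'
  exact hw x (mem_of_infDist_compl_pos (by linarith)) x' (mem_of_infDist_compl_pos (by linarith)) h

theorem div_le_two_mul_div_of_ball_inter_ball_nonempty {X : Type*} [PseudoMetricSpace X]
    {s : Set X} {x y : X} {r ρ : ℝ} (hr : r = infDist x s / 8) (hρ : ρ = infDist y s / 8)
    (h : (ball y (2 * ρ) ∩ ball x r).Nonempty) {L : ℝ} (hL : 0 ≤ L) :
    L / ρ ≤ 2 * L / r := by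
  have hr_pos : 0 < r := nonempty_ball.1 h.right
  have hρ_pos : 0 < 2 * ρ := nonempty_ball.1 h.left
  have hrρ : r ≤ 2 * ρ := by
    subst hr hρ
    linarith [infDist_le_two_mul_infDist_of_ball_inter_ball_nonempty h]
  calc L / ρ = 2 * L / (2 * ρ) := (mul_div_mul_left L ρ two_ne_zero).symm
    _ ≤ 2 * L / r := div_le_div_of_nonneg_left (by linarith) hr_pos hrρ

theorem discrete_convolution_lipschitz_on_whitney_balls_general {X ι E : Type*}
    [PseudoMetricSpace X] [SeminormedAddCommGroup E] [NormedSpace ℝ E] {Ω : Set X} {N L : ℝ}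
    (hL : 0 ≤ L) {x : ι → X} {r : ι → ℝ} (hr : ∀ i, r i = infDist (x i) Ωᶜ / 8)
    (hoverlap : ∀ y, {i | y ∈ ball (x i) (6 * r i)}.Finite ∧
      ({i | y ∈ ball (x i) (6 * r i)}.ncard : ℝ) ≤ N)
    {φ : ι → X → ℝ} (hφ_lip : ∀ i a b, |φ i a - φ i b| ≤ L / r i * dist a b)
    (hφ_supp : ∀ i, ∀ a ∉ ball (x i) (2 * r i), φ i a = 0)
    (hφ_sum : ∀ a ∈ Ω, HasSum (fun i => φ i a) 1) {c : ι → E} {i : ι} {M : ℝ}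
    (hc : ∀ j, (ball (x j) (2 * r j) ∩ ball (x i) (r i)).Nonempty → ‖c i - c j‖ ≤ M)
    {a b : X} (ha : a ∈ ball (x i) (r i)) (hb : b ∈ ball (x i) (r i)) :
    ‖∑' j, φ j a • c j - ∑' j, φ j b • c j‖ ≤ 4 * N * L * M / r i * dist a b := by
  have hri : 0 < r i := pos_of_mem_ball ha
  have hball : ball (x i) (r i) ⊆ Ω :=
    (ball_subset_ball (by linarith [hr i])).trans ball_infDist_compl_subset
  have hM : 0 ≤ M := (norm_nonneg _).trans <|
    hc i ⟨a, ball_subset_ball (by linarith) ha, ha⟩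
  have hsupp (y : X) {j : ι} (hj : j ∈ (φ · y).support) : y ∈ ball (x j) (2 * r j) :=
    not_imp_comm.1 (hφ_supp j y) hj
  have hsubset (y : X) : (φ · y).support ⊆ {j | y ∈ ball (x j) (6 * r j)} := fun j hj =>
    ball_subset_ball (by linarith [pos_of_mem_ball (hsupp y hj)]) (hsupp y hj)
  have hterm : ∀ j ∈ (φ · a).support ∪ (φ · b).support,
      ‖φ j a - φ j b‖ * ‖c j - c i‖ ≤ 2 * L / r i * dist a b * M := by
    intro j hj
    have hmeet : (ball (x j) (2 * r j) ∩ ball (x i) (r i)).Nonempty :=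
      hj.elim (fun h => ⟨a, hsupp a h, ha⟩) fun h => ⟨b, hsupp b h, hb⟩
    have hφ : ‖φ j a - φ j b‖ ≤ 2 * L / r i * dist a b := (hφ_lip j a b).trans <| by
      gcongr ?_ * _
      exact div_le_two_mul_div_of_ball_inter_ball_nonempty (hr i) (hr j) hmeet hL
    have hcj : ‖c j - c i‖ ≤ M := norm_sub_rev (c i) (c j) ▸ hc j hmeet
    gcongr
  have hsum : ∑' j, φ j a = ∑' j, φ j b :=
    (hφ_sum a (hball ha)).tsum_eq.trans (hφ_sum b (hball hb)).tsum_eq.symm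
  calc ‖∑' j, φ j a • c j - ∑' j, φ j b • c j‖
      ≤ ((φ · a).support ∪ (φ · b).support).ncard * (2 * L / r i * dist a b * M) :=
        norm_tsum_smul_sub_tsum_smul_le ((hoverlap a).1.subset (hsubset a))
          ((hoverlap b).1.subset (hsubset b)) hsum hterm
    _ ≤ 2 * N * (2 * L / r i * dist a b * M) := by
      gcongr
      exact ncard_support_union_support_le (hsubset a) (hsubset b) (hoverlap a) (hoverlap b)
    _ = 4 * N * L * M / r i * dist a b := by ring

/-- Lipschitz estimate for the discrete convolution of a `δ`-regularizable weight:
given a Whitney cover `{B_i = B(x_i,r_i)}` of `Ω` with `r_i = d_Ω(x_i)/8`, overlap bound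
`N` for the balls `6B_i`, and an associated partition of unity `{φ_i}` with Lipschitz
constants `L/r_i`, there is `C₀ ≥ 1`, depending only on `N` and `L`, such that for every
`δ`-regularizable weight `w` (integrable on each `B_i`), the discrete convolution
`w̃ = Σ_i w_{B_i} φ_i` is Lipschitz on each `B_i` with constant `C₀ δ w_{B_i}/r_i`. -/
theorem discrete_convolution_lipschitz_on_whitney_balls :
    ∃ C₀ : ℝ → ℝ → ℝ,
      ∀ N L : ℝ, 1 ≤ N → 1 ≤ L →
        1 ≤ C₀ N L ∧
        ∀ (X : Type) [MetricSpace X] [MeasurableSpace X] (μ : Measure X) (Cμ : ℝ),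
          1 ≤ Cμ → IsDoublingWith μ Cμ →
          ∀ Ω : Set X, IsOpen Ω → Ωᶜ.Nonempty →
          ∀ (x : ℕ → X) (r : ℕ → ℝ),
            (∀ i, r i = infDist (x i) Ωᶜ / 8) →
            Ω = ⋃ i, ball (x i) (r i) →
            (∀ y : X, {i : ℕ | y ∈ ball (x i) (6 * r i)}.Finite ∧
              (({i : ℕ | y ∈ ball (x i) (6 * r i)}).ncard : ℝ) ≤ N) →
          ∀ φ : ℕ → X → ℝ,
            (∀ i, ∀ a b : X, |φ i a - φ i b| ≤ L / r i * dist a b) →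
            (∀ i a, 0 ≤ φ i a) → (∀ i a, φ i a ≤ 1) →
            (∀ i, ∀ a ∉ ball (x i) (2 * r i), φ i a = 0) →
            (∀ a ∈ Ω, HasSum (fun i => φ i a) 1) →
          ∀ (δ : ℝ) (w : X → ℝ), 0 < δ → (∀ a, 0 ≤ w a) →
            DeltaRegularizable μ Ω w δ →
            (∀ i, IntegrableOn w (ball (x i) (r i)) μ) →
            ∀ i, ∀ a ∈ ball (x i) (r i), ∀ b ∈ ball (x i) (r i),
              |(∑' j, (⨍ y in ball (x j) (r j), w y ∂μ) * φ j a) -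
                  ∑' j, (⨍ y in ball (x j) (r j), w y ∂μ) * φ j b| ≤
                C₀ N L * δ * (⨍ y in ball (x i) (r i), w y ∂μ) / r i * dist a b := by
  refine ⟨fun N L => 4 * N * L, fun N L hN hL => ⟨by nlinarith, ?_⟩⟩
  intro X _ _ μ _ _ _ Ω _ _ x r hr _ hoverlap φ hφ_lip _ _ hφ_supp hφ_sum δ w _ _ hw _ i a ha b hb
  simpa only [smul_eq_mul, mul_comm (φ _ _), Real.norm_eq_abs, mul_assoc] using
    discrete_convolution_lipschitz_on_whitney_balls_general (by linarith) hr hoverlap hφ_lip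
      hφ_supp hφ_sum (c := fun j => ⨍ y in ball (x j) (r j), w y ∂μ)
      (fun j => hw.abs_setAverage_sub_setAverage_le (hr i) (hr j)) ha hb
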